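/- arXiv:0903.0648 — 2 statements merged into one kernel-verified Lean document; each statement's English description precedes it below -/
import Mathlib

section
/- In the free metabelian group M₂ of rank 2 with free generators x, y, the subgroup H = ⟨xᵐ, y⟩ (for m > 0) is free metabelian of rank 2, its image in the abelianization M₂/[M₂,M₂] ≅ ℤ × ℤ is mℤ × ℤ, and [H,H] = [M₂,M₂] ∩ H. -/
namespace Stmt14

/-- The free group of rank 2. -/
abbrev F2 := FreeGroup (Fin 2)

/-- The free metabelian group of rank 2: the quotient of the free group of
rank 2 by its second derived subgroup. -/
abbrev M2 := F2 ⧸ (⁅commutator F2, commutator F2⁆ : Subgroup F2)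

/-- The first free generator of `M2`. -/
def x : M2 := QuotientGroup.mk (FreeGroup.of 0)

/-- The second free generator of `M2`. -/
def y : M2 := QuotientGroup.mk (FreeGroup.of 1)

/-- The subgroup `mℤ × ℤ` of `ℤ × ℤ`. -/
def Amod (m : ℕ) : AddSubgroup (ℤ × ℤ) where
  carrier := {p | (m : ℤ) ∣ p.1}
  zero_mem' := dvd_zero _
  add_mem' := fun ha hb => dvd_add ha hb
  neg_mem' := fun {p} hp => by simpa using hp.neg_right

/-!
The commutator subgroup of `M₂` is a cyclic `ℤ[ℤ × ℤ]`-module, generated by `⁅x, y⁆`. Let `f` be a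
homomorphism from `M₂` to a wreath product `ℤ ≀ B` inducing an injection `σ : ℤ × ℤ → B`. On the
commutator subgroup `f` is `σ`-semilinear, `r • ⁅x, y⁆ ↦ σ(r) w` with `w ∈ ℤ[B]`. If `ℤ[B]` has no
zero divisors, as for `B = ℤ × ℤ`, then `f` is injective as soon as `w ≠ 0`, that is, as soon as
`f x` and `f y` do not commute.

This applies to the endomorphism `x ↦ a`, `y ↦ b` followed by the Magnus embedding, whenever the
images of `a` and `b` in `ℤ × ℤ` are linearly independent: taking first moments in `ℤ[ℤ × ℤ]` turns
`ab = ba` into a linear relation between these images. For `a = xᵐ` and `b = y` independence is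
clear.
-/

open AddMonoidAlgebra Multiplicative
open scoped commutatorElement

theorem isMulCommutative_commutator_quotient (G : Type*) [Group G] :
    IsMulCommutative (commutator (G ⧸ ⁅commutator G, commutator G⁆)) := by
  let π := QuotientGroup.mk' ⁅commutator G, commutator G⁆
  have hπ : commutator (G ⧸ ⁅commutator G, commutator G⁆) = (commutator G).map π := by
    rw [map_commutator_eq, MonoidHom.range_eq_top.2 (QuotientGroup.mk'_surjective _)]
    exact commutator_def _
  rw [← Subgroup.commutator_self_eq_bot_iff, hπ, ← Subgroup.map_commutator,
    Subgroup.map_eq_bot_iff, QuotientGroup.ker_mk']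

section TwoGenerated

variable {G : Type*} [Group G] {a b : G}

theorem isMulCommutative_of_closure_pair_eq_top (hab : Subgroup.closure {a, b} = ⊤)
    (h : Commute a b) : IsMulCommutative G := by
  have hcomm : IsMulCommutative (Subgroup.closure {a, b}) := by
    refine Subgroup.isMulCommutative_closure ?_
    rintro u (rfl | rfl) v (rfl | rfl)
    exacts [rfl, h, h.symm, rfl]
  rw [hab, isMulCommutative_iff_of_setLike] at hcomm
  exact .of_comm fun u v => hcomm u trivial v trivial

theorem closure_pair_map_eq_top {K : Type*} [Group K] {f : G →* K}
    (hf : Function.Surjective f) (hab : Subgroup.closure {a, b} = ⊤) :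
    Subgroup.closure {f a, f b} = ⊤ := by
  rw [← Set.image_pair, ← MonoidHom.map_closure, hab, Subgroup.map_top_of_surjective f hf]

theorem commutator_eq_normalClosure_of_closure_pair (hab : Subgroup.closure {a, b} = ⊤) :
    commutator G = Subgroup.normalClosure {⁅a, b⁆} := by
  refine le_antisymm ?_ (Subgroup.normalClosure_le_normal (Set.singleton_subset_iff.2 <|
    Subgroup.commutator_mem_commutator (Subgroup.mem_top a) (Subgroup.mem_top b)))
  let π := QuotientGroup.mk' (Subgroup.normalClosure {⁅a, b⁆})
  have hcomm : Commute (π a) (π b) := by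
    rw [← commutatorElement_eq_one_iff_commute, ← map_commutatorElement]
    exact (QuotientGroup.eq_one_iff _).2 (Subgroup.subset_normalClosure rfl)
  have := isMulCommutative_of_closure_pair_eq_top
    (closure_pair_map_eq_top (QuotientGroup.mk'_surjective _) hab) hcomm
  exact Subgroup.Normal.quotient_commutative_iff_commutator_le.1 inferInstance

end TwoGenerated

section IntProd

/-- The homomorphism `(i, j) ↦ i • p + j • q` out of the free abelian group `ℤ × ℤ`. -/
def intProdLift {A : Type*} [AddCommGroup A] (p q : A) : ℤ × ℤ →+ A :=
  (zmultiplesHom A p).coprod (zmultiplesHom A q)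

theorem intProdLift_apply {A : Type*} [AddCommGroup A] (p q : A) (v : ℤ × ℤ) :
    intProdLift p q v = v.1 • p + v.2 • q := rfl

theorem intProdLift_injective {A : Type*} [AddCommGroup A] {p q : A}
    (h : LinearIndependent ℤ ![p, q]) : Function.Injective (intProdLift p q) := by
  rw [injective_iff_map_eq_zero]
  exact fun v hv => Prod.ext_iff.2 (LinearIndependent.pair_iff.1 h v.1 v.2 hv)

variable {G : Type*} [Group G] {a b : G} {φ : G →* Multiplicative (ℤ × ℤ)}

theorem surjective_of_map_eq_basis (ha : φ a = ofAdd (1, 0)) (hb : φ b = ofAdd (0, 1)) :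
    Function.Surjective φ := fun v =>
  ⟨a ^ (toAdd v).1 * b ^ (toAdd v).2, toAdd.injective <| by simp [ha, hb]⟩

theorem ker_eq_commutator_of_map_eq_basis (hab : Subgroup.closure {a, b} = ⊤)
    (ha : φ a = ofAdd (1, 0)) (hb : φ b = ofAdd (0, 1)) : φ.ker = commutator G := by
  refine le_antisymm ?_ (Abelianization.commutator_subset_ker φ)
  let ψ : Multiplicative (ℤ × ℤ) →* Abelianization G := AddMonoidHom.toMultiplicativeLeft
    (intProdLift (.ofMul (.of a)) (.ofMul (.of b)))
  have hψ : ψ.comp φ = Abelianization.of := by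
    refine MonoidHom.eq_of_eqOn_dense hab ?_
    rintro _ (rfl | rfl) <;> simp [ψ, ha, hb, intProdLift_apply]
  rw [← Abelianization.ker_of, ← hψ, ← MonoidHom.comap_ker]
  exact Subgroup.ker_le_comap φ ψ.ker

end IntProd

theorem commutator_range_eq_inf {G K : Type*} [Group G] [Group K] {f : G →* K}
    (h : (commutator K).comap f ≤ commutator G) :
    ⁅f.range, f.range⁆ = commutator K ⊓ f.range := by
  have hle : commutator G ≤ (commutator K).comap f := by
    rw [← Subgroup.map_le_iff_le_comap, map_commutator_eq]
    exact Subgroup.commutator_mono le_top le_top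
  rw [← map_commutator_eq, hle.antisymm h, Subgroup.map_comap_eq, inf_comm]

section CyclicModule

variable {G : Type*} [Group G]

theorem conj_eq_conj_of_map_eq {K : Type*} [Group K] {φ : G →* K} [IsMulCommutative φ.ker] {c : G}
    (hc : c ∈ φ.ker) {g h : G} (hgh : φ g = φ h) : g * c * g⁻¹ = h * c * h⁻¹ := by
  have hk : h⁻¹ * g ∈ φ.ker := by simp [MonoidHom.mem_ker, hgh]
  have hcomm : h⁻¹ * g * c = c * (h⁻¹ * g) := setLike_mul_comm hk hc
  calc g * c * g⁻¹ = h * (h⁻¹ * g * c) * g⁻¹ := by group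
    _ = h * (c * (h⁻¹ * g)) * g⁻¹ := by rw [hcomm]
    _ = h * c * h⁻¹ := by group

open scoped IsMulCommutative in
theorem exists_hom_single_eq_zpow {A : Type*} {N : Subgroup G} [IsMulCommutative N] {u : A → G}
    (hu : ∀ p, u p ∈ N) :
    ∃ Λ : Multiplicative (AddMonoidAlgebra ℤ A) →* G,
      ∀ p n, Λ (ofAdd (single p n)) = u p ^ n := by
  let L : AddMonoidAlgebra ℤ A →+ Additive N :=
    (Finsupp.liftAddHom fun p => zmultiplesHom _ (Additive.ofMul ⟨u p, hu p⟩)).comp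
      coeffAddEquiv.toAddMonoidHom
  exact ⟨N.subtype.comp (AddMonoidHom.toMultiplicativeLeft L), fun p n => by simp [L]⟩

-- Conjugation makes the abelian group `φ.ker` a `ℤ[A]`-module; the homomorphism is `r ↦ r • c`.
theorem exists_hom_range_eq_normalClosure {A : Type*} [AddGroup A] {φ : G →* Multiplicative A}
    (hφ : Function.Surjective φ) [IsMulCommutative φ.ker] {c : G} (hc : c ∈ φ.ker) :
    ∃ Λ : Multiplicative (AddMonoidAlgebra ℤ A) →* G, Λ.range = Subgroup.normalClosure {c} ∧
      ∀ g, Λ (ofAdd (single (toAdd (φ g)) 1)) = g * c * g⁻¹ := by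
  choose s hs using fun p : A => hφ (ofAdd p)
  obtain ⟨Λ, hΛ_single⟩ := exists_hom_single_eq_zpow
    fun p => φ.normal_ker.conj_mem c hc (s p)
  have hΛ (g : G) : Λ (ofAdd (single (toAdd (φ g)) 1)) = g * c * g⁻¹ := by
    rw [hΛ_single, zpow_one]
    exact conj_eq_conj_of_map_eq hc (hs _)
  have hmem (r : AddMonoidAlgebra ℤ A) : Λ (ofAdd r) ∈ Subgroup.normalClosure {c} := by
    induction r using AddMonoidAlgebra.induction_linear with
    | zero => rw [ofAdd_zero, map_one]; exact one_mem _
    | add r r' hr hr' => rw [ofAdd_add, map_mul]; exact mul_mem hr hr'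
    | single p n =>
      rw [hΛ_single]
      exact zpow_mem (Subgroup.normalClosure_normal.conj_mem c
        (Subgroup.subset_normalClosure (Set.mem_singleton c)) (s p)) n
  refine ⟨Λ, le_antisymm ?_ ?_, hΛ⟩
  · rintro _ ⟨r, rfl⟩
    exact hmem (toAdd r)
  · refine (Subgroup.closure_le _).2 fun u hu => ?_
    obtain ⟨_, rfl, hconj_u⟩ := Group.mem_conjugatesOfSet_iff.1 hu
    obtain ⟨g, rfl⟩ := isConj_iff.1 hconj_u
    exact ⟨_, hΛ g⟩

end CyclicModule

section Wreath

/-- The action of `A` on its integral group ring `ℤ[A]` by multiplication by monomials. -/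
noncomputable def monomialAction (A : Type*) [AddGroup A] :
    Multiplicative A →* MulAut (Multiplicative (AddMonoidAlgebra ℤ A)) :=
  (MulAutMultiplicative _).symm.toMonoidHom.comp <|
    (DistribMulAction.toAddAut (AddMonoidAlgebra ℤ A)ˣ _).comp (of ℤ A).toHomUnits

theorem monomialAction_apply {A : Type*} [AddGroup A] (p : Multiplicative A)
    (r : Multiplicative (AddMonoidAlgebra ℤ A)) :
    monomialAction A p r = ofAdd (single (toAdd p) 1 * toAdd r) := rfl

/-- The restricted wreath product `ℤ ≀ A`, the target of the Magnus embedding. The base group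
`⨁_A ℤ` is encoded as the additive group of the group ring `ℤ[A]`. -/
abbrev IntWreath (A : Type*) [AddGroup A] :=
  Multiplicative (AddMonoidAlgebra ℤ A) ⋊[monomialAction A] Multiplicative A

namespace IntWreath

theorem conj_inl {A : Type*} [AddGroup A] (g : IntWreath A)
    (r : Multiplicative (AddMonoidAlgebra ℤ A)) :
    g * SemidirectProduct.inl r * g⁻¹ = SemidirectProduct.inl (monomialAction A g.right r) := by
  ext1
  · simp [mul_comm]
  · simp

instance isMulCommutative_commutator {A : Type*} [AddCommGroup A] :
    IsMulCommutative (commutator (IntWreath A)) := by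
  have hle : commutator (IntWreath A) ≤ SemidirectProduct.inl.range := by
    rw [SemidirectProduct.range_inl_eq_ker_rightHom]
    exact Abelianization.commutator_subset_ker _
  refine .of_setLike_mul_comm fun u hu v hv => ?_
  obtain ⟨r, rfl⟩ := hle hu
  obtain ⟨s, rfl⟩ := hle hv
  rw [← map_mul, mul_comm, map_mul]

variable {G : Type*} [Group G] {A B : Type*} [AddGroup A] [AddGroup B]

theorem map_eq_inl_mapDomain_mul {φ : G →* Multiplicative A} (hφ : Function.Surjective φ)
    {c : G} {Λ : Multiplicative (AddMonoidAlgebra ℤ A) →* G}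
    (hΛ : ∀ g, Λ (ofAdd (single (toAdd (φ g)) 1)) = g * c * g⁻¹)
    {f : G →* IntWreath B} {σ : A →+ B} (hf : ∀ g, (f g).right = ofAdd (σ (toAdd (φ g))))
    {w : Multiplicative (AddMonoidAlgebra ℤ B)} (hw : f c = SemidirectProduct.inl w)
    (r : Multiplicative (AddMonoidAlgebra ℤ A)) :
    f (Λ r) = SemidirectProduct.inl (ofAdd (mapDomain σ (toAdd r) * toAdd w)) := by
  suffices h : (f.comp Λ).toAdditive = (SemidirectProduct.inl.comp
      (AddMonoidHom.toMultiplicative ((AddMonoidHom.mulRight (toAdd w)).comp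
        (mapDomainRingHom ℤ σ).toAddMonoidHom))).toAdditive from DFunLike.congr_fun h r
  refine addHom_ext' fun p => AddMonoidHom.ext_int (Additive.toMul.injective ?_)
  obtain ⟨g, hg⟩ := hφ (ofAdd p)
  change f (Λ (ofAdd (single p 1))) =
    SemidirectProduct.inl (ofAdd (mapDomain σ (single p 1) * toAdd w))
  rw [← toAdd_ofAdd p, ← hg, hΛ, map_mul, map_mul, map_inv, hw, conj_inl, hf,
    monomialAction_apply, mapDomain_single, toAdd_ofAdd]

theorem injective_of_map_ne_one [NoZeroDivisors (AddMonoidAlgebra ℤ B)]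
    {φ : G →* Multiplicative A} (hφ : Function.Surjective φ) [IsMulCommutative φ.ker]
    {c : G} (hker : φ.ker = Subgroup.normalClosure {c})
    {f : G →* IntWreath B} {σ : A →+ B} (hσ : Function.Injective σ)
    (hf : ∀ g, (f g).right = ofAdd (σ (toAdd (φ g)))) (hfc : f c ≠ 1) :
    Function.Injective f := by
  have hc : c ∈ φ.ker := hker ▸ Subgroup.subset_normalClosure rfl
  obtain ⟨Λ, hrange, hΛ⟩ := exists_hom_range_eq_normalClosure hφ hc
  obtain ⟨w, hw⟩ : f c ∈ SemidirectProduct.inl.range := by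
    rw [SemidirectProduct.range_inl_eq_ker_rightHom, MonoidHom.mem_ker]
    simp [hf, MonoidHom.mem_ker.1 hc]
  have hfΛ := map_eq_inl_mapDomain_mul hφ hΛ hf hw.symm
  have hw0 : toAdd w ≠ 0 := fun h0 => hfc (by rw [← hw, toAdd_eq_zero.1 h0, map_one])
  rw [injective_iff_map_eq_one]
  intro g hg
  have hσg : σ (toAdd (φ g)) = σ 0 := by
    rw [map_zero, ← ofAdd_eq_one, ← hf, hg, SemidirectProduct.one_right]
  obtain ⟨r, rfl⟩ : g ∈ Λ.range := by
    rw [hrange, ← hker, MonoidHom.mem_ker, ← toAdd_eq_zero]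
    exact hσ hσg
  have hr : mapDomain σ (toAdd r) = mapDomain σ 0 := by
    rw [hfΛ, ← map_one SemidirectProduct.inl, SemidirectProduct.inl_inj, ofAdd_eq_one] at hg
    rw [mapDomain_zero, (mul_eq_zero.1 hg).resolve_right hw0]
  rw [toAdd_eq_zero.1 (mapDomain_injective hσ hr), map_one]

end IntWreath

end Wreath

section Augmentation

/-- The augmentation `∑ nₚ p ↦ ∑ nₚ` of the group ring `ℤ[A]`. -/
noncomputable def augmentation (A : Type*) : AddMonoidAlgebra ℤ A →+ ℤ :=
  (Finsupp.liftAddHom fun _ => AddMonoidHom.id ℤ).comp coeffAddEquiv.toAddMonoidHom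

/-- The first moment `∑ nₚ p ↦ ∑ nₚ • p` of the group ring `ℤ[A]`, which measures the class of an
element of the augmentation ideal modulo its square. -/
noncomputable def firstMoment (A : Type*) [AddCommGroup A] : AddMonoidAlgebra ℤ A →+ A :=
  (Finsupp.liftAddHom fun p => zmultiplesHom A p).comp coeffAddEquiv.toAddMonoidHom

@[simp]
theorem augmentation_single {A : Type*} (p : A) (n : ℤ) : augmentation A (single p n) = n := by
  simp [augmentation]

theorem augmentation_single_mul {A : Type*} [AddMonoid A] (p : A) (r : AddMonoidAlgebra ℤ A) :
    augmentation A (single p 1 * r) = augmentation A r := by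
  suffices h : (augmentation A).comp (AddMonoidHom.mulLeft (single p 1)) = augmentation A from
    DFunLike.congr_fun h r
  ext; simp [single_mul_single]

variable {A : Type*} [AddCommGroup A]

@[simp]
theorem firstMoment_single (p : A) (n : ℤ) : firstMoment A (single p n) = n • p := by
  simp [firstMoment]

theorem firstMoment_single_mul (p : A) (r : AddMonoidAlgebra ℤ A) :
    firstMoment A (single p 1 * r) = firstMoment A r + augmentation A r • p := by
  suffices h : (firstMoment A).comp (AddMonoidHom.mulLeft (single p 1)) =
      firstMoment A + ((smulAddHom ℤ A).flip p).comp (augmentation A) from DFunLike.congr_fun h r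
  ext; simp [single_mul_single, add_comm]

namespace IntWreath

/-- The homomorphism from `ℤ ≀ A` to `ℤ` that augments the base group and kills `A`. -/
noncomputable def augHom (A : Type*) [AddGroup A] : IntWreath A →* Multiplicative ℤ where
  toFun g := ofAdd (augmentation A (toAdd g.left))
  map_one' := by simp
  map_mul' g h := by
    simp [monomialAction_apply, augmentation_single_mul]

theorem augHom_smul_right_eq_of_commute {g h : IntWreath A} (hgh : Commute g h) :
    toAdd (augHom A h) • toAdd g.right = toAdd (augHom A g) • toAdd h.right := by
  have hleft := congrArg (fun k : IntWreath A => firstMoment A (toAdd k.left)) hgh.eq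
  simp only [SemidirectProduct.mul_left, toAdd_mul, map_add, monomialAction_apply, toAdd_ofAdd,
    firstMoment_single_mul] at hleft
  rw [← add_assoc, ← add_assoc, add_comm (firstMoment A _) (firstMoment A (toAdd g.left))] at hleft
  exact add_left_cancel hleft

end IntWreath

end Augmentation

namespace M2

instance isMulCommutative_commutator : IsMulCommutative (commutator M2) :=
  isMulCommutative_commutator_quotient F2

section Lift

variable {G : Type*} [Group G] [IsMulCommutative (commutator G)]

/-- The universal property of `M2` among metabelian groups: the homomorphism `x ↦ a`, `y ↦ b`. -/
noncomputable def lift (a b : G) : M2 →* G :=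
  QuotientGroup.lift _ (FreeGroup.lift ![a, b]) <| by
    have h : (commutator F2).map (FreeGroup.lift ![a, b]) ≤ commutator G := by
      rw [map_commutator_eq]
      exact Subgroup.commutator_mono le_top le_top
    rw [← Subgroup.map_eq_bot_iff, Subgroup.map_commutator, eq_bot_iff]
    exact (Subgroup.commutator_mono h h).trans
      (Subgroup.commutator_self_eq_bot_iff.2 inferInstance).le

@[simp]
theorem lift_x (a b : G) : lift a b x = a := by
  simp [lift, x]

@[simp]
theorem lift_y (a b : G) : lift a b y = b := by
  simp [lift, y]

end Lift

theorem closure_x_y : Subgroup.closure {x, y} = (⊤ : Subgroup M2) := by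
  have h : Subgroup.closure {FreeGroup.of 0, FreeGroup.of 1} = (⊤ : Subgroup F2) := by
    rw [← FreeGroup.closure_range_of]
    congr 1
    ext g
    simp [Fin.exists_fin_two, eq_comm]
  have hπ := closure_pair_map_eq_top
    (QuotientGroup.mk'_surjective ⁅commutator F2, commutator F2⁆) h
  exact hπ

theorem hom_ext {G : Type*} [Group G] {f g : M2 →* G} (hx : f x = g x) (hy : f y = g y) :
    f = g :=
  MonoidHom.eq_of_eqOn_dense closure_x_y <| by
    rintro _ (rfl | rfl)
    exacts [hx, hy]

theorem range_lift {G : Type*} [Group G] [IsMulCommutative (commutator G)] (a b : G) :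
    (lift a b).range = Subgroup.closure {a, b} := by
  rw [MonoidHom.range_eq_map, ← closure_x_y, MonoidHom.map_closure, Set.image_pair, lift_x, lift_y]

/-- The Magnus embedding of `M2` into `ℤ ≀ (ℤ × ℤ)`, in the version that keeps only the Fox
derivative with respect to `y`; hence `x` has trivial base component. -/
noncomputable def magnus : M2 →* IntWreath (ℤ × ℤ) :=
  lift (SemidirectProduct.inr (ofAdd (1, 0)))
    (SemidirectProduct.inl (ofAdd 1) * SemidirectProduct.inr (ofAdd (0, 1)))

section Abelianization

variable {φ : M2 →* Multiplicative (ℤ × ℤ)}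

theorem map_lift_eq_intProdLift (hx : φ x = ofAdd (1, 0)) (hy : φ y = ofAdd (0, 1)) (a b g : M2) :
    φ (lift a b g) = ofAdd (intProdLift (toAdd (φ a)) (toAdd (φ b)) (toAdd (φ g))) := by
  suffices h : φ.comp (lift a b) = (AddMonoidHom.toMultiplicative
      (intProdLift (toAdd (φ a)) (toAdd (φ b)))).comp φ from DFunLike.congr_fun h g
  apply hom_ext <;> simp [hx, hy, intProdLift_apply]

theorem right_magnus (hx : φ x = ofAdd (1, 0)) (hy : φ y = ofAdd (0, 1)) (g : M2) :
    (magnus g).right = φ g := by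
  suffices h : SemidirectProduct.rightHom.comp magnus = φ from DFunLike.congr_fun h g
  apply hom_ext <;> simp [magnus, hx, hy]

theorem augHom_magnus (hx : φ x = ofAdd (1, 0)) (hy : φ y = ofAdd (0, 1)) (g : M2) :
    toAdd (IntWreath.augHom _ (magnus g)) = (toAdd (φ g)).2 := by
  suffices h : (IntWreath.augHom _).comp magnus =
      (AddMonoidHom.toMultiplicative (AddMonoidHom.snd ℤ ℤ)).comp φ from
    congrArg toAdd (DFunLike.congr_fun h g)
  apply hom_ext
  · simp [magnus, hx, IntWreath.augHom]
  · simp [magnus, hy, IntWreath.augHom, one_def]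

theorem magnus_commutator_ne_one (hx : φ x = ofAdd (1, 0)) (hy : φ y = ofAdd (0, 1)) {a b : M2}
    (hab : LinearIndependent ℤ ![toAdd (φ a), toAdd (φ b)]) : magnus ⁅a, b⁆ ≠ 1 := by
  intro h
  rw [map_commutatorElement, commutatorElement_eq_one_iff_commute] at h
  have hrel := IntWreath.augHom_smul_right_eq_of_commute h
  rw [augHom_magnus hx hy, augHom_magnus hx hy, right_magnus hx hy, right_magnus hx hy] at hrel
  have hindep := LinearIndependent.pair_iff.1 hab
  obtain ⟨hb₂, ha₂⟩ := hindep (toAdd (φ b)).2 (-(toAdd (φ a)).2) (by rw [hrel]; simp)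
  obtain ⟨-, ha₁⟩ := hindep (toAdd (φ b)).1 (-(toAdd (φ a)).1) <|
    Prod.ext (by simp [mul_comm]) (by simp [hb₂, neg_eq_zero.1 ha₂])
  exact hab.ne_zero 0 (Prod.ext (neg_eq_zero.1 ha₁) (neg_eq_zero.1 ha₂))

theorem lift_injective (hx : φ x = ofAdd (1, 0)) (hy : φ y = ofAdd (0, 1)) {a b : M2}
    (hab : LinearIndependent ℤ ![toAdd (φ a), toAdd (φ b)]) : Function.Injective (lift a b) := by
  have hker := ker_eq_commutator_of_map_eq_basis closure_x_y hx hy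
  have : IsMulCommutative φ.ker := hker ▸ isMulCommutative_commutator
  have hright (g : M2) : ((magnus.comp (lift a b)) g).right =
      ofAdd (intProdLift (toAdd (φ a)) (toAdd (φ b)) (toAdd (φ g))) := by
    rw [MonoidHom.comp_apply, right_magnus hx hy, map_lift_eq_intProdLift hx hy]
  have hne : (magnus.comp (lift a b)) ⁅x, y⁆ ≠ 1 := by
    rw [MonoidHom.comp_apply, map_commutatorElement, lift_x, lift_y]
    exact magnus_commutator_ne_one hx hy hab
  exact .of_comp (IntWreath.injective_of_map_ne_one (surjective_of_map_eq_basis hx hy)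
    (hker.trans (commutator_eq_normalClosure_of_closure_pair closure_x_y))
    (intProdLift_injective hab) hright hne)

theorem comap_lift_commutator_le (hx : φ x = ofAdd (1, 0)) (hy : φ y = ofAdd (0, 1)) {a b : M2}
    (hab : LinearIndependent ℤ ![toAdd (φ a), toAdd (φ b)]) :
    (commutator M2).comap (lift a b) ≤ commutator M2 := by
  rw [← ker_eq_commutator_of_map_eq_basis closure_x_y hx hy]
  intro g hg
  rw [Subgroup.mem_comap, MonoidHom.mem_ker, map_lift_eq_intProdLift hx hy, ofAdd_eq_one,
    ← map_zero (intProdLift _ _)] at hg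
  exact toAdd_eq_zero.1 (intProdLift_injective hab hg)

end Abelianization

end M2

theorem stmt14_general (φ : M2 →* Multiplicative (ℤ × ℤ)) (hx : φ x = ofAdd (1, 0))
    (hy : φ y = ofAdd (0, 1)) (a b : M2)
    (hab : LinearIndependent ℤ ![toAdd (φ a), toAdd (φ b)]) :
    let H : Subgroup M2 := Subgroup.closure {a, b}
    Nonempty (H ≃* M2) ∧
    H.map φ = Subgroup.closure {φ a, φ b} ∧
    ⁅H, H⁆ = commutator M2 ⊓ H := by
  rw [← M2.range_lift]
  refine ⟨⟨(MonoidHom.ofInjective (M2.lift_injective hx hy hab)).symm⟩, ?_,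
    commutator_range_eq_inf (M2.comap_lift_commutator_le hx hy hab)⟩
  rw [M2.range_lift, MonoidHom.map_closure, Set.image_pair]

theorem closure_pair_eq_Amod (m : ℕ) :
    AddSubgroup.closure {((m : ℤ), (0 : ℤ)), (0, 1)} = Amod m := by
  ext p
  rw [AddSubgroup.mem_closure_pair]
  constructor
  · rintro ⟨i, j, rfl⟩
    exact ⟨i, by simp [mul_comm]⟩
  · rintro ⟨k, hk⟩
    exact ⟨k, p.2, by ext <;> simp [hk, mul_comm]⟩

section PowX

variable {φ : M2 →* Multiplicative (ℤ × ℤ)}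

theorem map_x_pow (hx : φ x = ofAdd (1, 0)) (m : ℕ) : φ (x ^ m) = ofAdd ((m : ℤ), (0 : ℤ)) := by
  simp [hx, ← ofAdd_nsmul]

theorem closure_map_x_pow_y (hx : φ x = ofAdd (1, 0)) (hy : φ y = ofAdd (0, 1)) (m : ℕ) :
    Subgroup.closure {φ (x ^ m), φ y} = AddSubgroup.toSubgroup (Amod m) := by
  rw [map_x_pow hx, hy, ← closure_pair_eq_Amod, AddSubgroup.toSubgroup_closure]
  rfl

theorem linearIndependent_map_x_pow_y (hx : φ x = ofAdd (1, 0)) (hy : φ y = ofAdd (0, 1))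
    {m : ℕ} (hm : 0 < m) : LinearIndependent ℤ ![toAdd (φ (x ^ m)), toAdd (φ y)] := by
  rw [map_x_pow hx, hy, LinearIndependent.pair_iff]
  intro i j h
  simpa [hm.ne'] using h

end PowX

/-- In the free metabelian group `M₂` of rank 2, for `m > 0` the subgroup
`H = ⟨xᵐ, y⟩` is free metabelian of rank 2, its image under the abelianization
map `φ : M₂ → ℤ × ℤ` (with `φ x = (1,0)`, `φ y = (0,1)`, `ker φ = [M₂,M₂]`)
is `mℤ × ℤ`, and `[H,H] = [M₂,M₂] ∩ H`. -/
theorem stmt14 (m : ℕ) (hm : 0 < m)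
    (φ : M2 →* Multiplicative (ℤ × ℤ))
    (hx : φ x = Multiplicative.ofAdd ((1 : ℤ), (0 : ℤ)))
    (hy : φ y = Multiplicative.ofAdd ((0 : ℤ), (1 : ℤ)))
    (hker : φ.ker = commutator M2) :
    let H : Subgroup M2 := Subgroup.closure {x ^ m, y}
    Nonempty (H ≃* M2) ∧
    H.map φ = AddSubgroup.toSubgroup (Amod m) ∧
    ⁅H, H⁆ = commutator M2 ⊓ H := by
  obtain ⟨e, hmap, hcomm⟩ :=
    stmt14_general φ hx hy (x ^ m) y (linearIndependent_map_x_pow_y hx hy hm)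
  exact ⟨e, hmap.trans (closure_map_x_pow_y hx hy m), hcomm⟩

end Stmt14
end

section
/- A word w over {x, x⁻¹, y, y⁻¹} represents the identity element of the free metabelian group of rank 2 on generators x, y if and only if the path traced by w in the Cayley graph of ℤ × ℤ (starting at the origin, with x and y moving one step in the two coordinate directions) is closed and traverses each edge of the graph a net total of zero times (counting reverse traversals negatively). -/
/-!
Let `φ` be a homomorphism from a free group to a group `G`, with kernel `N`, and read an element of
the free group as a path in the Cayley graph of `G`. Net traversal counts define a homomorphism
into a wreath product with abelian base (Magnus), under which `N` lands in the base, so `⁅N, N⁆` is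
killed. Conversely, the Reidemeister–Schreier rewriting of `g ∈ N` expresses its class in the
abelianization of `N` as the sum of the Schreier generators along the edges of the path; this sum
depends only on the net traversal counts, so it vanishes when they do.
-/

namespace Stmt15

/-- The free group of rank 2. -/
abbrev F2 := FreeGroup (Fin 2)

/-- The free metabelian group of rank 2: the quotient of the free group of
rank 2 by its second derived subgroup. -/
abbrev M2 := F2 ⧸ (⁅commutator F2, commutator F2⁆ : Subgroup F2)

/-- The unit step in the `i`-th coordinate direction of `ℤ × ℤ`
(`x` moves by `(1,0)`, `y` by `(0,1)`). -/
def vec : Fin 2 → ℤ × ℤ := fun i => if i = 0 then (1, 0) else (0, 1)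

/-- The displacement effected by a single letter `(i, b)` (`b = true` means the
generator, `b = false` its inverse). -/
def disp (l : Fin 2 × Bool) : ℤ × ℤ := if l.2 then vec l.1 else -vec l.1

/-- The endpoint of the path traced by a word starting at the origin. -/
def endpt (w : List (Fin 2 × Bool)) : ℤ × ℤ := (w.map disp).sum

/-- `trav w p e` is the net number of times (forward minus backward) that the
path traced by the word `w`, starting at `p`, traverses the edge `e`; an edge
is encoded as `(v, i)`, joining `v` to `v + vec i`. -/
def trav : List (Fin 2 × Bool) → ℤ × ℤ → (ℤ × ℤ) × Fin 2 → ℤ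
  | [], _, _ => 0
  | l :: rest, p, e =>
      (if e = ((if l.2 then p else p + disp l), l.1) then (if l.2 then (1 : ℤ) else -1) else 0)
        + trav rest (p + disp l) e

theorem commute_of_right_eq_one {D Q : Type*} [CommGroup D] [Group Q] {a b : D ≀ᵣ Q}
    (ha : a.right = 1) (hb : b.right = 1) : Commute a b := by
  ext x
  · simp [ha, hb, mul_comm]
  · simp [ha, hb]

section Flow

variable {α G : Type*} [Group G] (φ : FreeGroup α →* G)

/-- The homomorphism to a wreath product that induces the Magnus embedding of the quotient by
`⁅φ.ker, φ.ker⁆`; it records the net traversal counts of paths in the Cayley graph of `G`. The edge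
from `p` to `p * φ (of i)` is encoded as `(p, i)`. The base component at `p⁻¹`, rather than at `p`,
describes the path that starts at `p`, because multiplication in `D ≀ᵣ Q` evaluates the base of its
second factor at `a.right⁻¹ * x`. -/
noncomputable def magnus : FreeGroup α →* Multiplicative (G × α →₀ ℤ) ≀ᵣ G :=
  FreeGroup.lift fun i =>
    ⟨fun x => Multiplicative.ofAdd (Finsupp.single (x⁻¹, i) 1), φ (FreeGroup.of i)⟩

/-- The net number of times (forward minus backward) that the path which starts at `p` and spells
`g` traverses each edge of the Cayley graph of `G`, as a finitely supported function. -/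
noncomputable def flow (g : FreeGroup α) (p : G) : G × α →₀ ℤ :=
  ((magnus φ g).left p⁻¹).toAdd

theorem magnus_right (g : FreeGroup α) : (magnus φ g).right = φ g := by
  have h : RegularWreathProduct.rightHom.comp (magnus φ) = φ := by
    ext i
    simp [magnus]
  exact DFunLike.congr_fun h g

@[simp]
theorem flow_one (p : G) : flow φ 1 p = 0 := by
  simp [flow]

@[simp]
theorem flow_of (i : α) (p : G) : flow φ (FreeGroup.of i) p = Finsupp.single (p, i) 1 := by
  simp [flow, magnus]

theorem flow_mul (g h : FreeGroup α) (p : G) :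
    flow φ (g * h) p = flow φ g p + flow φ h (p * φ g) := by
  simp [flow, magnus_right]

theorem flow_inv (g : FreeGroup α) (p : G) : flow φ g⁻¹ p = -flow φ g (p * (φ g)⁻¹) := by
  simp [flow, magnus_right]

theorem commutator_ker_le_ker_magnus : ⁅φ.ker, φ.ker⁆ ≤ (magnus φ).ker := by
  rw [Subgroup.commutator_le]
  intro a ha b hb
  rw [MonoidHom.mem_ker, map_commutatorElement, commutatorElement_eq_one_iff_commute]
  refine commute_of_right_eq_one ?_ ?_
  · rwa [magnus_right]
  · rwa [magnus_right]

end Flow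

section Schreier

variable {H G : Type*} [Group H] [Group G] {φ : H →* G}

/-- An equivariant transversal of `φ`: a choice of an element of `H` for each point of `G`,
compatible with right multiplication by the elements of `H`. For surjective `φ` the sections of `φ`
are examples; in general equivariance takes care of the points of `G` outside the range of `φ`. -/
def IsEquivariantTransversal (φ : H →* G) (t : G → H) : Prop :=
  ∀ p g, φ (t (p * φ g)) = φ (t p) * φ g

theorem exists_isEquivariantTransversal (φ : H →* G) : ∃ t, IsEquivariantTransversal φ t := by
  have h (p : G) : ∃ g : H, (p : G ⧸ φ.range).out * φ g = p := by
    obtain ⟨⟨_, g, rfl⟩, hg⟩ := QuotientGroup.mk_out_eq_mul φ.range p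
    exact ⟨g⁻¹, by simp [hg]⟩
  choose t ht using h
  refine ⟨t, fun p g => ?_⟩
  have hcoset : ((p * φ g : G) : G ⧸ φ.range) = p :=
    QuotientGroup.mk_mul_of_mem p (MonoidHom.mem_range.2 ⟨g, rfl⟩)
  have hout := ht (p * φ g)
  rw [hcoset] at hout
  rw [← mul_right_inj, hout, ← mul_assoc, ht]

variable {t : G → H} (ht : IsEquivariantTransversal φ t)

/-- The loop, an element of the kernel, that a path starting at `p` and spelling `g` becomes when
its two ends are joined to the base point along the transversal `t`. For a generator `g` this
is a Schreier generator. -/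
def schreierLoop (p : G) (g : H) : φ.ker :=
  ⟨t p * g * (t (p * φ g))⁻¹, by simp [MonoidHom.mem_ker, ht p g]⟩

theorem schreierLoop_one (p : G) : schreierLoop ht p 1 = 1 := by
  simp [schreierLoop]

theorem schreierLoop_mul (p : G) (g h : H) :
    schreierLoop ht p (g * h) = schreierLoop ht p g * schreierLoop ht (p * φ g) h := by
  ext
  simp [schreierLoop, mul_assoc]

theorem coe_schreierLoop_of_map_eq_one (p : G) {g : H} (hg : φ g = 1) :
    (schreierLoop ht p g : H) = t p * g * (t p)⁻¹ := by
  simp [schreierLoop, hg]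

/-- The class of `schreierLoop` in the abelianized kernel, in additive notation. -/
def schreierClass (p : G) (g : H) : Additive (Abelianization φ.ker) :=
  Additive.ofMul (Abelianization.of (schreierLoop ht p g))

theorem schreierClass_one (p : G) : schreierClass ht p 1 = 0 := by
  simp [schreierClass, schreierLoop_one]

theorem schreierClass_mul (p : G) (g h : H) :
    schreierClass ht p (g * h) = schreierClass ht p g + schreierClass ht (p * φ g) h := by
  simp [schreierClass, schreierLoop_mul]

end Schreier

section Kernel

variable {α G : Type*} [Group G] {φ : FreeGroup α →* G}

theorem schreierClass_eq_linearCombination_flow {t : G → FreeGroup α}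
    (ht : IsEquivariantTransversal φ t) (g : FreeGroup α) (p : G) :
    schreierClass ht p g =
      Finsupp.linearCombination ℤ (fun e : G × α => schreierClass ht e.1 (FreeGroup.of e.2))
        (flow φ g p) := by
  induction g using FreeGroup.induction_on generalizing p with
  | C1 => rw [schreierClass_one, flow_one, map_zero]
  | of i => simp
  | inv_of i ih =>
    have h := schreierClass_mul ht p (FreeGroup.of i)⁻¹ (FreeGroup.of i)
    rw [inv_mul_cancel, schreierClass_one, map_inv, ih] at h
    rw [flow_inv, map_neg]
    exact eq_neg_of_add_eq_zero_left h.symm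
  | mul g h ihg ihh => rw [schreierClass_mul, flow_mul, map_add, ihg, ihh]

theorem mem_commutator_ker_of_flow_eq_zero {g : FreeGroup α} (hg : φ g = 1)
    (hflow : flow φ g 1 = 0) : g ∈ ⁅φ.ker, φ.ker⁆ := by
  obtain ⟨t, ht⟩ := exists_isEquivariantTransversal φ
  have hclass : Abelianization.of (schreierLoop ht 1 g) = 1 := by
    have h := schreierClass_eq_linearCombination_flow ht g 1
    rwa [hflow, map_zero] at h
  rw [← MonoidHom.mem_ker, Abelianization.ker_of] at hclass
  have hconj : t 1 * g * (t 1)⁻¹ ∈ ⁅φ.ker, φ.ker⁆ := by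
    rw [← coe_schreierLoop_of_map_eq_one ht 1 hg, ← Subgroup.map_subtype_commutator]
    exact Subgroup.mem_map_of_mem φ.ker.subtype hclass
  simpa [mul_assoc] using Subgroup.Normal.conj_mem' inferInstance _ hconj (t 1)

theorem stmt15_general (φ : FreeGroup α →* G) (g : FreeGroup α) :
    g ∈ ⁅φ.ker, φ.ker⁆ ↔ φ g = 1 ∧ flow φ g 1 = 0 := by
  refine ⟨fun h => ?_, fun ⟨hg, hflow⟩ => mem_commutator_ker_of_flow_eq_zero hg hflow⟩
  have hmagnus : magnus φ g = 1 := commutator_ker_le_ker_magnus φ h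
  exact ⟨by rw [← magnus_right, hmagnus]; rfl, by rw [flow, hmagnus]; rfl⟩

end Kernel

section Lattice

/-- The homomorphism from the free group of rank 2 to the lattice `ℤ × ℤ` that sends the `i`-th
generator to the `i`-th unit step. -/
def latticeHom : F2 →* Multiplicative (ℤ × ℤ) :=
  FreeGroup.lift fun i => Multiplicative.ofAdd (vec i)

theorem ker_latticeHom : latticeHom.ker = commutator F2 := by
  refine le_antisymm (fun g hg => ?_) (Abelianization.commutator_subset_ker latticeHom)
  let x (i : Fin 2) : Additive (Abelianization F2) :=
    Additive.ofMul (Abelianization.of (FreeGroup.of i))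
  let ψ : Multiplicative (ℤ × ℤ) →* Abelianization F2 := AddMonoidHom.toMultiplicativeLeft
    ((zmultiplesHom _ (x 0)).coprod (zmultiplesHom _ (x 1)))
  have hψ : ψ.comp latticeHom = Abelianization.of := by
    ext i
    fin_cases i <;> simp [ψ, x, latticeHom, vec]
  rw [← Abelianization.ker_of, MonoidHom.mem_ker, ← hψ, MonoidHom.comp_apply, hg, map_one]

theorem mk_cons {α : Type*} (l : α × Bool) (w : List (α × Bool)) :
    FreeGroup.mk (l :: w) = FreeGroup.mk [l] * FreeGroup.mk w := by
  rw [FreeGroup.mul_mk, List.singleton_append]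

theorem mk_singleton_true {α : Type*} (i : α) : FreeGroup.mk [(i, true)] = FreeGroup.of i :=
  rfl

theorem mk_singleton_false {α : Type*} (i : α) :
    FreeGroup.mk [(i, false)] = (FreeGroup.of i)⁻¹ :=
  rfl

theorem latticeHom_of (i : Fin 2) :
    latticeHom (FreeGroup.of i) = Multiplicative.ofAdd (vec i) :=
  FreeGroup.lift_apply_of

theorem latticeHom_mk_singleton (l : Fin 2 × Bool) :
    latticeHom (FreeGroup.mk [l]) = Multiplicative.ofAdd (disp l) := by
  obtain ⟨i, _ | _⟩ := l
  · simp [mk_singleton_false, latticeHom_of, disp]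
  · simp [mk_singleton_true, latticeHom_of, disp]

theorem latticeHom_mk (w : List (Fin 2 × Bool)) :
    latticeHom (FreeGroup.mk w) = Multiplicative.ofAdd (endpt w) := by
  induction w with
  | nil => rfl
  | cons l w ih =>
    rw [mk_cons, map_mul, latticeHom_mk_singleton, ih, ← ofAdd_add, endpt, endpt, List.map_cons,
      List.sum_cons]

theorem flow_latticeHom_mk_singleton (l : Fin 2 × Bool) (p : ℤ × ℤ) :
    flow latticeHom (FreeGroup.mk [l]) (Multiplicative.ofAdd p) =
      Finsupp.single (Multiplicative.ofAdd (if l.2 then p else p + disp l), l.1)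
        (if l.2 then 1 else -1) := by
  obtain ⟨i, _ | _⟩ := l
  · simp [mk_singleton_false, flow_inv, latticeHom_of, disp]
  · simp [mk_singleton_true]

theorem flow_latticeHom_mk_apply (w : List (Fin 2 × Bool)) (p v : ℤ × ℤ) (i : Fin 2) :
    flow latticeHom (FreeGroup.mk w) (Multiplicative.ofAdd p) (Multiplicative.ofAdd v, i) =
      trav w p (v, i) := by
  induction w generalizing p with
  | nil => rw [← FreeGroup.one_eq_mk, flow_one, Finsupp.zero_apply, trav]
  | cons l w ih =>
    rw [mk_cons, flow_mul, latticeHom_mk_singleton, ← ofAdd_add, Finsupp.add_apply, ih,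
      flow_latticeHom_mk_singleton, Finsupp.single_apply, trav]
    simp only [Prod.mk.injEq, EmbeddingLike.apply_eq_iff_eq, eq_comm]

theorem flow_latticeHom_mk_eq_zero_iff (w : List (Fin 2 × Bool)) :
    flow latticeHom (FreeGroup.mk w) 1 = 0 ↔ ∀ e, trav w 0 e = 0 := by
  refine ⟨fun h e => ?_, fun h => Finsupp.ext fun e => ?_⟩
  · rw [← flow_latticeHom_mk_apply w 0 e.1 e.2, ofAdd_zero, h, Finsupp.zero_apply]
  · exact (flow_latticeHom_mk_apply w 0 e.1.toAdd e.2).trans (h _)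

end Lattice

/-- A word `w` over `{x,x⁻¹,y,y⁻¹}` represents the identity of the free
metabelian group of rank 2 if and only if the path it traces in the Cayley
graph of `ℤ × ℤ` from the origin is closed and traverses every edge a net
total of zero times. -/
theorem stmt15 (w : List (Fin 2 × Bool)) :
    (QuotientGroup.mk (FreeGroup.mk w) : M2) = 1 ↔
      (endpt w = 0 ∧ ∀ e : (ℤ × ℤ) × Fin 2, trav w 0 e = 0) := by
  rw [QuotientGroup.eq_one_iff, ← ker_latticeHom, stmt15_general, latticeHom_mk, ofAdd_eq_one,
    flow_latticeHom_mk_eq_zero_iff]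

end Stmt15
end
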